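/- Let d ≥ 3 and let A, B ∈ ℂ[x,y] be homogeneous of degree d without common factor such that every linear factor of D = (∂A/∂x)(∂B/∂y) − (∂A/∂y)(∂B/∂x) divides C = xA + yB (i.e. ω = A dx + B dy defines a convex homogeneous foliation of degree d). Then D = c·ℓ₁^{d−1}ℓ₂^{d−1} for some c ∈ ℂ∖{0} and non-proportional linear forms ℓ₁, ℓ₂ (i.e. the foliation has type 2·R_{d−1}) if and only if ω is linearly conjugate to ω₁^d = y^d dx − x^d dy. -/

import Mathlib

open MvPolynomial

noncomputable section

/-- Polynomials in two variables `x = X 0`, `y = X 1` over `ℂ`. -/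
abbrev P2 : Type := MvPolynomial (Fin 2) ℂ

/-- The inflection polynomial `D_ω = A_x B_y - A_y B_x` of `ω = A dx + B dy`. -/
def Dpoly (A B : P2) : P2 :=
  pderiv 0 A * pderiv 1 B - pderiv 1 A * pderiv 0 B

/-- The tangent cone `C_ω = xA + yB` of `ω = A dx + B dy`. -/
def Cpoly (A B : P2) : P2 := X 0 * A + X 1 * B

/-- `A` and `B` have no common (non-unit) factor. -/
def NoCommonFactor (A B : P2) : Prop := ∀ p : P2, p ∣ A → p ∣ B → IsUnit p

/-- Convexity: every linear factor of `D_ω` divides `C_ω`. -/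
def IsConvexPair (A B : P2) : Prop :=
  ∀ l : P2, l.IsHomogeneous 1 → l ≠ 0 → l ∣ Dpoly A B → l ∣ Cpoly A B

/-- Composition of a polynomial with the linear map `φ(x,y) = (a₁x + a₂y, a₃x + a₄y)`. -/
def comp2 (a₁ a₂ a₃ a₄ : ℂ) (p : P2) : P2 :=
  aeval ![C a₁ * X 0 + C a₂ * X 1, C a₃ * X 0 + C a₄ * X 1] p

/-- `ω = A dx + B dy` is linearly conjugate to `ω' = A' dx + B' dy`:
`φ*ω = λ ω'` for some `φ ∈ GL₂(ℂ)` and `λ ∈ ℂ \ {0}`. -/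
def LinConj (A B A' B' : P2) : Prop :=
  ∃ a₁ a₂ a₃ a₄ lam : ℂ, a₁ * a₄ - a₂ * a₃ ≠ 0 ∧ lam ≠ 0 ∧
    C a₁ * comp2 a₁ a₂ a₃ a₄ A + C a₃ * comp2 a₁ a₂ a₃ a₄ B = C lam * A' ∧
    C a₂ * comp2 a₁ a₂ a₃ a₄ A + C a₄ * comp2 a₁ a₂ a₃ a₄ B = C lam * B'

/-- Two polynomials are proportional (one is a constant multiple of the other). -/
def Proportional (l₁ l₂ : P2) : Prop := ∃ t : ℂ, l₁ = C t * l₂ ∨ l₂ = C t * l₁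

/-!
A linear change of coordinates moves the two inflection lines to `x = 0` and `y = 0`. Convexity then
gives `x ∣ B` and `y ∣ A`, hence `x ∤ A` and `y ∤ B` by coprimality. By Euler's identity
`d (A B_y - B A_y) = x D`, so `x ^ d` divides the Wronskian on the left. Write `B = x ^ k Q` with
`x ∤ Q`; since `y (A Q_y - Q A_y) ≡ -k A Q` modulo `x`, the Wronskian of `A` and `B` is divisible
by `x` exactly `k` times, so `k ≥ d` and `B = b x ^ d`. Symmetrically `A = a y ^ d`, and rescaling
`x` by a `(d - 1)`-th root of `-a / b` gives the normal form up to a scalar. Conversely, the type is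
a linear invariant and the normal form has `D = d ^ 2 x ^ (d - 1) y ^ (d - 1)`.
-/

section LinearSubstitution

variable {n R : Type*} [Fintype n] [CommRing R]

/-- The substitution `X i ↦ ∑ j, M i j * X j`, that is, composition with the linear map of
matrix `M`. -/
def linSubst (M : Matrix n n R) : MvPolynomial n R →ₐ[R] MvPolynomial n R :=
  bind₁ M.toMvPolynomial

lemma linSubst_X (M : Matrix n n R) (i : n) : linSubst M (X i) = ∑ j, C (M i j) * X j := by
  simp only [linSubst, bind₁_X_right, Matrix.toMvPolynomial, C_mul_X_eq_monomial]

lemma linSubst_C (M : Matrix n n R) (r : R) : linSubst M (C r) = C r :=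
  bind₁_C_right _ r

lemma linSubst_linSubst (M N : Matrix n n R) (p : MvPolynomial n R) :
    linSubst N (linSubst M p) = linSubst (M * N) p := by
  simp only [linSubst, bind₁_bind₁, ← Matrix.toMvPolynomial_mul]

lemma linSubst_toMvPolynomial (M N : Matrix n n R) (i : n) :
    linSubst N (M.toMvPolynomial i) = (M * N).toMvPolynomial i :=
  (Matrix.toMvPolynomial_mul M N i).symm

lemma isHomogeneous_linSubst (M : Matrix n n R) {p : MvPolynomial n R} {d : ℕ}
    (hp : p.IsHomogeneous d) : (linSubst M p).IsHomogeneous d := by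
  have h := hp.aeval M.toMvPolynomial M.toMvPolynomial_isHomogeneous
  rwa [one_mul] at h

lemma pderiv_linSubst (M : Matrix n n R) (p : MvPolynomial n R) (j : n) :
    pderiv j (linSubst M p) = ∑ i, C (M i j) * linSubst M (pderiv i p) := by
  classical
  induction p using MvPolynomial.induction_on with
  | C r => simp only [linSubst_C, pderiv_C, map_zero, mul_zero, Finset.sum_const_zero]
  | add p q hp hq => simp only [map_add, hp, hq, mul_add, Finset.sum_add_distrib]
  | mul_X p k hp =>
    have hX : pderiv j (linSubst M (X k)) = C (M k j) := by
      simp [linSubst_X, pderiv_X, Pi.single_apply]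
    have hsum : ∑ i, C (M i j) * (linSubst M p * linSubst M (pderiv i (X k))) =
        linSubst M p * C (M k j) := by
      simp [pderiv_X, Pi.single_apply, apply_ite (linSubst M), mul_comm]
    simp only [map_mul, pderiv_mul, hp, hX, map_add, mul_add, Finset.sum_add_distrib, hsum,
      Finset.sum_mul, mul_assoc]

variable [DecidableEq n]

lemma linSubst_one (p : MvPolynomial n R) : linSubst 1 p = p := by
  rw [linSubst, Matrix.toMvPolynomial_one, bind₁_X_left, AlgHom.id_apply]

lemma linSubst_inv_linSubst (M : GL n R) (p : MvPolynomial n R) :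
    linSubst (M⁻¹ : GL n R).val (linSubst M.val p) = p := by
  rw [linSubst_linSubst, Units.mul_inv, linSubst_one]

lemma linSubst_linSubst_inv (M : GL n R) (p : MvPolynomial n R) :
    linSubst M.val (linSubst (M⁻¹ : GL n R).val p) = p := by
  rw [linSubst_linSubst, Units.inv_mul, linSubst_one]

lemma linSubst_injective (M : GL n R) : Function.Injective (linSubst M.val) :=
  Function.LeftInverse.injective (linSubst_inv_linSubst M)

end LinearSubstitution

lemma exists_toMvPolynomial_eq {n m R : Type*} [Fintype n] [CommRing R]
    {l : m → MvPolynomial n R} (hl : ∀ i, (l i).IsHomogeneous 1) :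
    ∃ L : Matrix m n R, L.toMvPolynomial = l := by
  have hspan (i : m) : ∃ a : n → R, ∑ j, a j • X j = l i := by
    rw [← Submodule.mem_span_range_iff_exists_fun, ← homogeneousSubmodule_one_eq_span_X]
    exact hl i
  choose L hL using hspan
  refine ⟨L, funext fun i ↦ ?_⟩
  simp only [← hL i, Matrix.toMvPolynomial, ← C_mul_X_eq_monomial, smul_eq_C_mul]

lemma exists_linSubst_eq_X {n K : Type*} [Fintype n] [DecidableEq n] [Field K]
    {l : n → MvPolynomial n K} (hl : ∀ i, (l i).IsHomogeneous 1) (hind : LinearIndependent K l) :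
    ∃ M : GL n K, ∀ i, linSubst M.val (l i) = X i := by
  obtain ⟨L, rfl⟩ := exists_toMvPolynomial_eq hl
  have hrows : LinearIndependent K L.row := by
    refine .of_comp (Fintype.linearCombination K (X : n → MvPolynomial n K)) ?_
    convert hind using 1
    funext i
    simp [Fintype.linearCombination_apply, Matrix.toMvPolynomial, ← C_mul_X_eq_monomial,
      smul_eq_C_mul]
  obtain ⟨M, rfl⟩ := Matrix.linearIndependent_rows_iff_isUnit.mp hrows
  refine ⟨M⁻¹, fun i ↦ ?_⟩
  rw [linSubst_toMvPolynomial, Units.mul_inv, Matrix.toMvPolynomial_one]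

lemma univ_fin_two_eq_pair {i j : Fin 2} (hij : i ≠ j) : Finset.univ = {i, j} := by
  decide +revert

section Wronskian

variable {K : Type*} [Field K] {i j : Fin 2} {A B : MvPolynomial (Fin 2) K} {d e m : ℕ}

lemma X_mul_pderiv_add_X_mul_pderiv (hij : i ≠ j) (hA : A.IsHomogeneous d) :
    X i * pderiv i A + X j * pderiv j A = C (d : K) * A := by
  rw [map_natCast, ← nsmul_eq_mul, ← hA.sum_X_mul_pderiv, univ_fin_two_eq_pair hij,
    Finset.sum_pair hij]

lemma C_mul_wronskian_eq (hij : i ≠ j) (hA : A.IsHomogeneous d) (hB : B.IsHomogeneous d) :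
    C (d : K) * (A * pderiv j B - B * pderiv j A) =
      X i * (pderiv i A * pderiv j B - pderiv j A * pderiv i B) := by
  linear_combination pderiv j A * X_mul_pderiv_add_X_mul_pderiv hij hB -
    pderiv j B * X_mul_pderiv_add_X_mul_pderiv hij hA

lemma X_not_dvd_wronskian [CharZero K] (hij : i ≠ j) (hA : A.IsHomogeneous d)
    (hB : B.IsHomogeneous e) (hde : d ≠ e) (hXA : ¬ X i ∣ A) (hXB : ¬ X i ∣ B) :
    ¬ X i ∣ A * pderiv j B - B * pderiv j A := by
  intro h
  have hAB : X i ∣ C ((e : K) - d) * (A * B) := by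
    have hmod : C ((e : K) - d) * (A * B) = X j * (A * pderiv j B - B * pderiv j A) +
        X i * (A * pderiv i B - B * pderiv i A) := by
      rw [C_sub]
      linear_combination B * X_mul_pderiv_add_X_mul_pderiv hij hA -
        A * X_mul_pderiv_add_X_mul_pderiv hij hB
    rw [hmod]
    exact (h.mul_left _).add (Dvd.intro _ rfl)
  have hunit : IsUnit (C ((e : K) - d) : MvPolynomial (Fin 2) K) :=
    (sub_ne_zero.mpr (by exact_mod_cast hde.symm)).isUnit.map C
  rw [hunit.dvd_mul_left] at hAB
  exact (X_prime.dvd_or_dvd hAB).elim hXA hXB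

lemma isHomogeneous_of_X_pow_mul {σ R : Type*} [CommSemiring R] {i : σ} {p : MvPolynomial σ R}
    {d k : ℕ} (h : (X i ^ k * p).IsHomogeneous d) : p.IsHomogeneous (d - k) := by
  intro m hm
  have hdeg := @h (Finsupp.single i k + m) (by
    rwa [X_pow_eq_monomial, coeff_monomial_mul, one_mul])
  rw [map_add, Finsupp.weight_single, Pi.one_apply, smul_eq_mul, mul_one] at hdeg
  lia

lemma X_pow_dvd_of_X_pow_dvd_wronskian [CharZero K] (hij : i ≠ j) (hd : d ≠ 0)
    (hA : A.IsHomogeneous d) (hB : B.IsHomogeneous d) (hXA : ¬ X i ∣ A) (hXB : X i ∣ B)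
    (hW : X i ^ m ∣ A * pderiv j B - B * pderiv j A) : X i ^ m ∣ B := by
  obtain rfl | hB0 := eq_or_ne B 0
  · exact dvd_zero _
  obtain ⟨Q, hBQ, hXQ⟩ :=
    (FiniteMultiplicity.of_prime_left X_prime hB0).exists_eq_pow_mul_and_not_dvd
  set k := multiplicity (X i) B
  have hk : k ≠ 0 := by
    intro hk
    rw [hk, pow_zero, one_mul] at hBQ
    exact hXQ (hBQ ▸ hXB)
  have hQ : Q.IsHomogeneous (d - k) := isHomogeneous_of_X_pow_mul (hBQ ▸ hB)
  have hderiv : pderiv j B = X i ^ k * pderiv j Q := by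
    rw [hBQ, pderiv_mul, pderiv_pow, pderiv_X_of_ne hij, mul_zero, zero_mul, zero_add]
  have hfactor : A * pderiv j B - B * pderiv j A =
      X i ^ k * (A * pderiv j Q - Q * pderiv j A) := by
    rw [hderiv, hBQ]
    ring
  have hnot := X_not_dvd_wronskian hij hA hQ (by lia) hXA hXQ
  rw [hfactor] at hW
  exact (X_prime.pow_dvd_of_dvd_mul_right m hnot hW).trans (Dvd.intro _ hBQ.symm)

lemma exists_eq_C_mul_X_pow [CharZero K] (hij : i ≠ j) (hd : d ≠ 0) (hA : A.IsHomogeneous d)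
    (hB : B.IsHomogeneous d) (hXA : ¬ X i ∣ A) (hXB : X i ∣ B)
    (hD : X i ^ (d - 1) ∣ pderiv i A * pderiv j B - pderiv j A * pderiv i B) :
    ∃ b : K, B = C b * X i ^ d := by
  have hW : X i ^ d ∣ A * pderiv j B - B * pderiv j A := by
    have hunit : IsUnit (C (d : K) : MvPolynomial (Fin 2) K) :=
      (Nat.cast_ne_zero.mpr hd).isUnit.map C
    rw [← hunit.dvd_mul_left, C_mul_wronskian_eq hij hA hB, ← mul_pow_sub_one hd]
    exact mul_dvd_mul_left _ hD
  obtain ⟨Q, rfl⟩ := X_pow_dvd_of_X_pow_dvd_wronskian hij hd hA hB hXA hXB hW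
  have hQ : Q.IsHomogeneous 0 := by simpa using isHomogeneous_of_X_pow_mul hB
  rw [← totalDegree_zero_iff_isHomogeneous, totalDegree_eq_zero_iff_eq_C] at hQ
  exact ⟨coeff 0 Q, by rw [← hQ, mul_comm]⟩

end Wronskian

/-- A polynomial `1`-form `∑ i, ω i dxᵢ` in the variables indexed by `n`, encoded by its
coefficients. -/
abbrev PolyForm (n R : Type*) [CommSemiring R] : Type _ := n → MvPolynomial n R

namespace PolyForm

section CommRing

variable {n R : Type*} [Fintype n] [CommRing R] (ω : PolyForm n R)

/-- The pullback of a polynomial `1`-form under the linear map of matrix `M`. -/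
def pullback (M : Matrix n n R) : PolyForm n R :=
  fun j ↦ ∑ i, C (M i j) * linSubst M (ω i)

/-- The tangent cone `∑ i, xᵢ ωᵢ`: the contraction of `ω` with the radial vector field. -/
def tangentCone : MvPolynomial n R := ∑ i, X i * ω i

/-- The polynomials `ω i` have no common factor, so that `ω` has no zero divisor. -/
def HasNoCommonFactor : Prop := ∀ p, (∀ i, p ∣ ω i) → IsUnit p

variable {ω}

lemma pullback_smul (c : R) (M : Matrix n n R) : (c • ω).pullback M = c • ω.pullback M := by
  funext j
  simp only [pullback, Pi.smul_apply, map_smul, mul_smul_comm, Finset.smul_sum]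

lemma pullback_pullback (M N : Matrix n n R) :
    (ω.pullback M).pullback N = ω.pullback (M * N) := by
  funext k
  simp only [pullback, map_sum, map_mul, linSubst_C, linSubst_linSubst, Matrix.mul_apply,
    Finset.mul_sum, Finset.sum_mul]
  rw [Finset.sum_comm]
  exact Finset.sum_congr rfl fun i _ ↦ Finset.sum_congr rfl fun j _ ↦ by ring

lemma isHomogeneous_pullback {d : ℕ} (hω : ∀ i, (ω i).IsHomogeneous d) (M : Matrix n n R) (j : n) :
    (ω.pullback M j).IsHomogeneous d :=
  .sum _ _ _ fun i _ ↦ (isHomogeneous_linSubst M (hω i)).C_mul _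

lemma tangentCone_pullback (M : Matrix n n R) :
    (ω.pullback M).tangentCone = linSubst M ω.tangentCone := by
  simp only [tangentCone, pullback, map_sum, map_mul, linSubst_X, Finset.mul_sum, Finset.sum_mul]
  rw [Finset.sum_comm]
  exact Finset.sum_congr rfl fun i _ ↦ Finset.sum_congr rfl fun j _ ↦ by ring

lemma dvd_pullback {p : MvPolynomial n R} (hp : ∀ i, p ∣ ω i) (M : Matrix n n R) (j : n) :
    linSubst M p ∣ ω.pullback M j :=
  Finset.dvd_sum fun i _ ↦ (map_dvd (linSubst M) (hp i)).mul_left _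

variable [DecidableEq n]

lemma pullback_one : ω.pullback 1 = ω := by
  funext j
  simp [pullback, Matrix.one_apply, linSubst_one, apply_ite C]

lemma pullback_pullback_inv (M : GL n R) :
    (ω.pullback M.val).pullback (M⁻¹ : GL n R).val = ω := by
  rw [pullback_pullback, Units.mul_inv, pullback_one]

lemma HasNoCommonFactor.pullback (hω : ω.HasNoCommonFactor) (M : GL n R) :
    (ω.pullback M.val).HasNoCommonFactor := by
  intro p hp
  have hunit : IsUnit (linSubst (M⁻¹ : GL n R).val p) := hω _ fun i ↦ by
    simpa only [pullback_pullback_inv] using dvd_pullback hp (M⁻¹ : GL n R).val i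
  simpa only [linSubst_linSubst_inv] using hunit.map (linSubst M.val)

variable (ω)

/-- The Jacobian determinant of the coefficients of `ω`. In two variables it cuts out the
inflection divisor of the foliation defined by a homogeneous `ω`. -/
def inflection : MvPolynomial n R := (Matrix.of fun i j ↦ pderiv j (ω i)).det

/-- Every linear factor of the inflection polynomial divides the tangent cone. -/
def IsConvex : Prop :=
  ∀ l : MvPolynomial n R, l.IsHomogeneous 1 → l ≠ 0 → l ∣ ω.inflection → l ∣ ω.tangentCone

/-- `ω` and `ω'` agree up to a linear change of coordinates and an invertible scalar. -/
def IsLinConj (ω' : PolyForm n R) : Prop :=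
  ∃ (M : GL n R) (c : Rˣ), ω.pullback M.val = c.val • ω'

variable {ω} {ω' ω'' : PolyForm n R}

lemma inflection_smul (c : R) :
    (c • ω).inflection = C (c ^ Fintype.card n) * ω.inflection := by
  rw [C_pow, inflection, inflection, ← Matrix.det_smul]
  congr 1
  ext1 i j
  simp [smul_eq_C_mul]

lemma inflection_pullback (M : Matrix n n R) :
    (ω.pullback M).inflection = C (M.det ^ 2) * linSubst M ω.inflection := by
  have hjac : (Matrix.of fun i j ↦ pderiv j (ω.pullback M i)) =
      (M.map C).transpose * (Matrix.of fun i j ↦ pderiv j (ω i)).map (linSubst M) * M.map C := by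
    ext1 i j
    simp only [Matrix.of_apply, pullback, map_sum, pderiv_C_mul, pderiv_linSubst, Matrix.mul_apply,
      Matrix.transpose_apply, Matrix.map_apply, Finset.sum_mul, Finset.mul_sum]
    rw [Finset.sum_comm]
    exact Finset.sum_congr rfl fun k _ ↦ Finset.sum_congr rfl fun l _ ↦ by ring
  have hdetM : (M.map C).det = (C M.det : MvPolynomial n R) := (RingHom.map_det C M).symm
  have hdetJ := AlgHom.map_det (linSubst M) (Matrix.of fun i j ↦ pderiv j (ω i))
  rw [inflection, hjac, Matrix.det_mul, Matrix.det_mul, Matrix.det_transpose, hdetM, inflection,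
    hdetJ, AlgHom.mapMatrix_apply, C_pow]
  ring

lemma IsConvex.pullback (hω : ω.IsConvex) (M : GL n R) : (ω.pullback M.val).IsConvex := by
  intro l hl hl0 hdvd
  have hdet : IsUnit (C (M.val.det ^ 2) : MvPolynomial n R) :=
    ((M.isUnit.map Matrix.detMonoidHom).pow 2).map C
  rw [inflection_pullback, hdet.dvd_mul_left] at hdvd
  have hcone : linSubst (M⁻¹ : GL n R).val l ∣ ω.tangentCone :=
    hω _ (isHomogeneous_linSubst _ hl) ((map_ne_zero_iff _ (linSubst_injective M⁻¹)).mpr hl0)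
      (by simpa only [linSubst_inv_linSubst] using map_dvd (linSubst (M⁻¹ : GL n R).val) hdvd)
  rw [tangentCone_pullback]
  simpa only [linSubst_linSubst_inv] using map_dvd (linSubst M.val) hcone

lemma isLinConj_pullback (M : GL n R) : ω.IsLinConj (ω.pullback M.val) :=
  ⟨M, 1, (one_smul R _).symm⟩

lemma IsLinConj.symm (h : ω.IsLinConj ω') : ω'.IsLinConj ω := by
  obtain ⟨M, c, h⟩ := h
  refine ⟨M⁻¹, c⁻¹, ?_⟩
  have hω' : ω' = c⁻¹.val • ω.pullback M.val := by
    rw [h, smul_smul, Units.inv_mul, one_smul]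
  rw [hω', pullback_smul, pullback_pullback_inv]

lemma IsLinConj.trans (h : ω.IsLinConj ω') (h' : ω'.IsLinConj ω'') : ω.IsLinConj ω'' := by
  obtain ⟨M, c, h⟩ := h
  obtain ⟨N, c', h'⟩ := h'
  refine ⟨M * N, c * c', ?_⟩
  rw [Units.val_mul, ← pullback_pullback, h, pullback_smul, h', smul_smul, Units.val_mul]

end CommRing

section Field

variable {K : Type*} [Field K] {ω ω' : PolyForm (Fin 2) K} {i j : Fin 2} {k : ℕ}

/-- The inflection divisor of `ω` consists of two distinct lines, each with multiplicity `k`. For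
convex `ω` this is the type `2·R_k`: two radial singularities of order `k`. -/
def HasTypeTwoR (ω : PolyForm (Fin 2) K) (k : ℕ) : Prop :=
  ∃ c : K, c ≠ 0 ∧ ∃ l : Fin 2 → MvPolynomial (Fin 2) K, (∀ i, (l i).IsHomogeneous 1) ∧
    LinearIndependent K l ∧ ω.inflection = C c * l 0 ^ k * l 1 ^ k

lemma HasTypeTwoR.smul (hω : ω.HasTypeTwoR k) {r : K} (hr : r ≠ 0) : (r • ω).HasTypeTwoR k := by
  obtain ⟨c, hc, l, hl, hind, hD⟩ := hω
  refine ⟨r ^ 2 * c, mul_ne_zero (pow_ne_zero 2 hr) hc, l, hl, hind, ?_⟩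
  rw [inflection_smul, hD, Fintype.card_fin, C_mul, mul_assoc, mul_assoc, mul_assoc]

lemma HasTypeTwoR.pullback (hω : ω.HasTypeTwoR k) (M : GL (Fin 2) K) :
    (ω.pullback M.val).HasTypeTwoR k := by
  obtain ⟨c, hc, l, hl, hind, hD⟩ := hω
  have hdet : M.val.det ≠ 0 := (M.isUnit.map Matrix.detMonoidHom).ne_zero
  refine ⟨M.val.det ^ 2 * c, mul_ne_zero (pow_ne_zero 2 hdet) hc, fun i ↦ linSubst M.val (l i),
    fun i ↦ isHomogeneous_linSubst _ (hl i), ?_, ?_⟩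
  · exact hind.map_injOn (linSubst M.val).toLinearMap (linSubst_injective M).injOn
  · simp only [inflection_pullback, hD, map_mul, map_pow, linSubst_C, mul_assoc]

lemma HasTypeTwoR.of_isLinConj (hω : ω.HasTypeTwoR k) (h : ω'.IsLinConj ω) :
    ω'.HasTypeTwoR k := by
  obtain ⟨M, c, h⟩ := h.symm
  have hω' : ω' = c⁻¹.val • ω.pullback M.val := by rw [h, smul_smul, Units.inv_mul, one_smul]
  rw [hω']
  exact (hω.pullback M).smul c⁻¹.ne_zero

lemma HasTypeTwoR.exists_X_pow_dvd_inflection_pullback (hω : ω.HasTypeTwoR k) :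
    ∃ M : GL (Fin 2) K, ∀ i, X i ^ k ∣ (ω.pullback M.val).inflection := by
  obtain ⟨c, -, l, hl, hind, hD⟩ := hω
  obtain ⟨M, hM⟩ := exists_linSubst_eq_X hl hind
  have hpull : (ω.pullback M.val).inflection = C (M.val.det ^ 2 * c) * X 0 ^ k * X 1 ^ k := by
    simp only [inflection_pullback, hD, map_mul, map_pow, linSubst_C, hM, mul_assoc]
  refine ⟨M, fun i ↦ ?_⟩
  rw [hpull]
  fin_cases i
  exacts [(Dvd.intro_left _ rfl).mul_right _, Dvd.intro_left _ rfl]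

lemma tangentCone_fin_two (hij : i ≠ j) : ω.tangentCone = X i * ω i + X j * ω j := by
  rw [tangentCone, univ_fin_two_eq_pair hij, Finset.sum_pair hij]

lemma inflection_fin_two (hij : i ≠ j) : ω.inflection =
    pderiv i (ω i) * pderiv j (ω j) - pderiv j (ω i) * pderiv i (ω j) := by
  rw [inflection, Matrix.det_fin_two]
  simp only [Matrix.of_apply]
  obtain ⟨rfl, rfl⟩ | ⟨rfl, rfl⟩ : (i = 0 ∧ j = 1) ∨ (i = 1 ∧ j = 0) := by lia
  · rfl
  · ring

lemma X_dvd_of_X_dvd_tangentCone (hij : i ≠ j) (h : X i ∣ ω.tangentCone) : X i ∣ ω j := by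
  rw [tangentCone_fin_two hij, dvd_add_right (Dvd.intro _ rfl)] at h
  exact (X_prime.dvd_or_dvd h).resolve_left (mt X_dvd_X.mp hij)

lemma HasNoCommonFactor.not_X_dvd (hω : ω.HasNoCommonFactor) (hij : i ≠ j) (h : X i ∣ ω j) :
    ¬ X i ∣ ω i := by
  refine fun hi ↦ X_prime.not_isUnit (hω (X i) fun k ↦ ?_)
  have hk : k ∈ ({i, j} : Finset (Fin 2)) := univ_fin_two_eq_pair hij ▸ Finset.mem_univ k
  obtain rfl | rfl := by simpa using hk
  exacts [hi, h]

variable {d : ℕ}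

lemma isLinConj_of_pure_powers [IsAlgClosed K] (hd : 2 ≤ d) {a b : K} (ha : a ≠ 0) (hb : b ≠ 0) :
    IsLinConj ![C a * X 1 ^ d, C b * X 0 ^ d] ![X 1 ^ d, -X 0 ^ d] := by
  obtain ⟨s, hs⟩ := IsAlgClosed.exists_pow_nat_eq (-a / b) (n := d - 1) (by lia)
  have hs0 : s ≠ 0 := by
    rintro rfl
    rw [zero_pow (by lia), eq_comm] at hs
    exact div_ne_zero (neg_ne_zero.mpr ha) hb hs
  have hbs : b * s ^ d = -(a * s) := by
    rw [← pow_sub_one_mul (by lia : d ≠ 0), hs]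
    field_simp
  have hscale (p q : MvPolynomial (Fin 2) K) : pullback ![p, q] !![s, 0; 0, 1] =
      ![C s * linSubst !![s, 0; 0, 1] p, linSubst !![s, 0; 0, 1] q] := by
    funext j
    fin_cases j <;> simp [pullback]
  have hX0 : linSubst !![s, 0; 0, 1] (X 0) = C s * X 0 := by simp [linSubst_X]
  have hX1 : linSubst !![s, 0; 0, 1] (X 1) = X 1 := by simp [linSubst_X]
  refine ⟨.mkOfDetNeZero !![s, 0; 0, 1] (by simpa using hs0),
    Units.mk0 (a * s) (mul_ne_zero ha hs0), (hscale _ _).trans ?_⟩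
  simp only [map_mul, map_pow, linSubst_C, hX0, hX1, Units.val_mk0, Matrix.smul_cons,
    Matrix.smul_empty, smul_eq_C_mul, mul_neg, ← neg_mul]
  rw [mul_pow, ← mul_assoc (C b), ← C_pow, ← C_mul, hbs, C_neg, C_mul, mul_left_comm,
    mul_assoc, ← neg_mul]

variable [CharZero K]

lemma exists_eq_C_mul_X_pow_of_isConvex (hd : 2 ≤ d) (hω : ∀ i, (ω i).IsHomogeneous d)
    (hred : ω.HasNoCommonFactor) (hconv : ω.IsConvex) (hD : ∀ i, X i ^ (d - 1) ∣ ω.inflection)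
    (hij : i ≠ j) : ∃ b : K, b ≠ 0 ∧ ω j = C b * X i ^ d := by
  have hX {i j : Fin 2} (hij : i ≠ j) : X i ∣ ω j := X_dvd_of_X_dvd_tangentCone hij <|
    hconv _ (isHomogeneous_X K i) (X_ne_zero i) ((dvd_pow_self _ (by lia)).trans (hD i))
  obtain ⟨b, hb⟩ := exists_eq_C_mul_X_pow hij (by lia) (hω i) (hω j)
    (hred.not_X_dvd hij (hX hij)) (hX hij) (inflection_fin_two (ω := ω) hij ▸ hD i)
  refine ⟨b, ?_, hb⟩
  rintro rfl
  rw [C_0, zero_mul] at hb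
  exact hred.not_X_dvd hij.symm (hX hij.symm) (hb ▸ dvd_zero _)

lemma hasTypeTwoR_pure_powers (hd : d ≠ 0) :
    HasTypeTwoR (![X 1 ^ d, -X 0 ^ d] : PolyForm (Fin 2) K) (d - 1) := by
  refine ⟨(d : K) ^ 2, pow_ne_zero 2 (Nat.cast_ne_zero.mpr hd), X, isHomogeneous_X K,
    linearIndependent_X _ _, ?_⟩
  have hx : pderiv 0 (X 1 ^ d : MvPolynomial (Fin 2) K) = 0 := by
    rw [pderiv_pow, pderiv_X_of_ne one_ne_zero, mul_zero]
  rw [inflection_fin_two zero_ne_one]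
  simp only [Matrix.cons_val_zero, Matrix.cons_val_one, map_neg, hx, pderiv_pow, pderiv_X_self,
    C_pow, map_natCast]
  ring

end Field

end PolyForm

open PolyForm

theorem type_two_R_dminus1_iff_conj_general {K : Type*} [Field K] [IsAlgClosed K] [CharZero K]
    {d : ℕ} (hd : 2 ≤ d) {ω : PolyForm (Fin 2) K} (hω : ∀ i, (ω i).IsHomogeneous d)
    (hred : ω.HasNoCommonFactor) (hconv : ω.IsConvex) :
    ω.HasTypeTwoR (d - 1) ↔ ω.IsLinConj ![X 1 ^ d, -X 0 ^ d] := by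
  refine ⟨fun h ↦ ?_, (hasTypeTwoR_pure_powers (by lia)).of_isLinConj⟩
  obtain ⟨M, hM⟩ := h.exists_X_pow_dvd_inflection_pullback
  have hpure {i j : Fin 2} (hij : i ≠ j) := exists_eq_C_mul_X_pow_of_isConvex hd
    (isHomogeneous_pullback hω M.val) (hred.pullback M) (hconv.pullback M) hM hij
  obtain ⟨a, ha, hωa⟩ := hpure one_ne_zero
  obtain ⟨b, hb, hωb⟩ := hpure zero_ne_one
  have hM' : ω.pullback M.val = ![C a * X 1 ^ d, C b * X 0 ^ d] :=
    funext (Fin.forall_fin_two.mpr ⟨hωa, hωb⟩)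
  exact (isLinConj_pullback M).trans (hM' ▸ isLinConj_of_pure_powers hd ha hb)

section Plane

variable {A B A' B' : P2}

lemma comp2_eq_linSubst (a₁ a₂ a₃ a₄ : ℂ) (p : P2) :
    comp2 a₁ a₂ a₃ a₄ p = linSubst !![a₁, a₂; a₃, a₄] p := by
  rw [comp2, linSubst, bind₁]
  congr 2
  funext i
  fin_cases i <;> simp [Matrix.toMvPolynomial, C_mul_X_eq_monomial]

lemma cpoly_eq_tangentCone : Cpoly A B = tangentCone ![A, B] := by
  rw [tangentCone_fin_two zero_ne_one]
  rfl

lemma dpoly_eq_inflection : Dpoly A B = inflection ![A, B] := by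
  rw [inflection_fin_two zero_ne_one]
  rfl

lemma isConvexPair_iff : IsConvexPair A B ↔ IsConvex ![A, B] := by
  rw [IsConvexPair, IsConvex, cpoly_eq_tangentCone, dpoly_eq_inflection]

lemma noCommonFactor_iff : NoCommonFactor A B ↔ HasNoCommonFactor ![A, B] := by
  simp [NoCommonFactor, HasNoCommonFactor, Fin.forall_fin_two]

lemma linConj_iff : LinConj A B A' B' ↔ IsLinConj ![A, B] ![A', B'] := by
  have hpull (M : Matrix (Fin 2) (Fin 2) ℂ) (c : ℂ) :
      pullback ![A, B] M = c • ![A', B'] ↔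
      C (M 0 0) * comp2 (M 0 0) (M 0 1) (M 1 0) (M 1 1) A +
        C (M 1 0) * comp2 (M 0 0) (M 0 1) (M 1 0) (M 1 1) B = C c * A' ∧
      C (M 0 1) * comp2 (M 0 0) (M 0 1) (M 1 0) (M 1 1) A +
        C (M 1 1) * comp2 (M 0 0) (M 0 1) (M 1 0) (M 1 1) B = C c * B' := by
    simp [comp2_eq_linSubst, ← Matrix.eta_fin_two, funext_iff, pullback, Fin.sum_univ_two,
      smul_eq_C_mul]
  constructor
  · rintro ⟨a₁, a₂, a₃, a₄, c, hdet, hc, h⟩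
    exact ⟨.mkOfDetNeZero !![a₁, a₂; a₃, a₄] (by rwa [Matrix.det_fin_two_of]), Units.mk0 c hc,
      (hpull _ c).mpr h⟩
  · rintro ⟨M, c, h⟩
    refine ⟨M 0 0, M 0 1, M 1 0, M 1 1, c, ?_, c.ne_zero, (hpull _ c).mp h⟩
    rw [← Matrix.det_fin_two]
    exact (M.isUnit.map Matrix.detMonoidHom).ne_zero

lemma linearIndependent_pair_iff_not_proportional {l₁ l₂ : P2} :
    LinearIndependent ℂ ![l₁, l₂] ↔ ¬ Proportional l₁ l₂ := by
  obtain rfl | h₁ := eq_or_ne l₁ 0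
  · exact iff_of_false (fun h ↦ h.ne_zero 0 rfl) (not_not_intro ⟨0, .inl (by simp)⟩)
  · rw [LinearIndependent.pair_iff' h₁]
    constructor
    · rintro h ⟨t, ht | ht⟩
      · have ht0 : t ≠ 0 := by
          rintro rfl
          simp [h₁] at ht
        refine h t⁻¹ ?_
        rw [ht, ← smul_eq_C_mul, inv_smul_smul₀ ht0]
      · exact h t (by rw [ht, smul_eq_C_mul])
    · exact fun h t ht ↦ h ⟨t, .inr (by rw [← ht, smul_eq_C_mul])⟩

lemma hasTypeTwoR_iff {k : ℕ} : HasTypeTwoR ![A, B] k ↔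
    ∃ c : ℂ, c ≠ 0 ∧ ∃ l₁ l₂ : P2, l₁.IsHomogeneous 1 ∧ l₂.IsHomogeneous 1 ∧ l₁ ≠ 0 ∧ l₂ ≠ 0 ∧
      ¬ Proportional l₁ l₂ ∧ Dpoly A B = C c * l₁ ^ k * l₂ ^ k := by
  simp only [HasTypeTwoR, dpoly_eq_inflection, ← linearIndependent_pair_iff_not_proportional]
  refine exists_congr fun c ↦ and_congr_right fun _ ↦ ⟨?_, ?_⟩
  · rintro ⟨l, hl, hind, hD⟩
    have hl_eta : ![l 0, l 1] = l := funext (Fin.forall_fin_two.mpr ⟨rfl, rfl⟩)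
    exact ⟨l 0, l 1, hl 0, hl 1, hind.ne_zero 0, hind.ne_zero 1, hl_eta ▸ hind, hD⟩
  · rintro ⟨l₁, l₂, h₁, h₂, -, -, hind, hD⟩
    exact ⟨![l₁, l₂], Fin.forall_fin_two.mpr ⟨h₁, h₂⟩, hind, hD⟩

end Plane

/-- A convex homogeneous foliation `ω = A dx + B dy` of degree `d ≥ 3` has type
`2·R_{d−1}` if and only if `ω` is linearly conjugate to `ω₁^d = y^d dx − x^d dy`. -/
theorem type_two_R_dminus1_iff_conj
    (d : ℕ) (hd : 3 ≤ d)
    (A B : P2) (hA : A.IsHomogeneous d) (hB : B.IsHomogeneous d)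
    (hcop : NoCommonFactor A B) (hconv : IsConvexPair A B) :
    (∃ c : ℂ, c ≠ 0 ∧ ∃ l₁ l₂ : P2,
        l₁.IsHomogeneous 1 ∧ l₂.IsHomogeneous 1 ∧ l₁ ≠ 0 ∧ l₂ ≠ 0 ∧
        ¬ Proportional l₁ l₂ ∧
        Dpoly A B = C c * l₁ ^ (d - 1) * l₂ ^ (d - 1)) ↔
      LinConj A B (X 1 ^ d) (-X 0 ^ d) := by
  rw [← hasTypeTwoR_iff, linConj_iff]
  exact type_two_R_dminus1_iff_conj_general (by lia) (Fin.forall_fin_two.mpr ⟨hA, hB⟩)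
    (noCommonFactor_iff.mp hcop) (isConvexPair_iff.mp hconv)
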